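/- Let X = (X₁,...,X_m) be an ℝ^m-valued random field on T = [0,∞)^d that is continuous in probability and such that X_j(t) is not almost surely constant for every j and every t ∈ (0,∞)^d. Suppose an ℝ^m-valued random field Y on T belongs to the diagonal domain of attraction of X with normalizing function f = (f₁,...,f_m) : (0,∞)^d → (0,∞)^m, i.e. for all k and all t₁,...,t_k ∈ T, the random vectors (Y₁(a·t₁)/f₁(a),...,Y_m(a·t₁)/f_m(a),...,Y₁(a·t_k)/f₁(a),...,Y_m(a·t_k)/f_m(a)) converge in distribution to (X(t₁),...,X(t_k)) as a → ∞ (meaning min_i a_i → ∞). Then there exist nonnegative reals H_i^{(j)} and coordinate-wise slowly varying functions L_j such that f_j(a) = (∏_{i=1}^d a_i^{H_i^{(j)}})·L_j(a), and X is multi-self-similar: for every a ∈ (0,∞)^d, {X(a·t), t ∈ T} =_{f.d.d.} {(∏_i a_i^{H_i^{(1)}}·X₁(t),...,∏_i a_i^{H_i^{(m)}}·X_m(t)), t ∈ T}. -/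

import Mathlib

open MeasureTheory Filter Topology

/-!
Fix a coordinate `j`. For `x` in the open orthant, the laws of `Y_j(a·x)` normalized by `f_j(a)` and
by `f_j(a·x)` converge to the laws of `X_j(x)` and `X_j(1)`, neither of which is `δ₀`. By
convergence of types `f_j(a·x) / f_j(a)` converges to a limit `ψ_j(x) > 0`, which is multiplicative
and, since `t ↦ law (X_j(t))` is continuous, continuous in `x`; hence it is a monomial
`∏ x_i ^ H_i`. Self-similarity of `X` is then uniqueness of weak limits for the finite-dimensional
distributions, and `H_i ≥ 0` because the law of `X_j` extends continuously to the faces of the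
orthant.
-/

/-- The law of `c • Z` when `Z` has law `μ`. With `c : κ → ℝ` acting coordinatewise on `κ → E`,
this is the diagonal rescaling that normalizes each coordinate separately. -/
noncomputable def dilate {M E : Type*} [SMul M E] [MeasurableSpace E] [MeasurableConstSMul M E]
    (c : M) (μ : ProbabilityMeasure E) : ProbabilityMeasure E :=
  μ.map (measurable_const_smul c).aemeasurable

section Dilation

variable {M E : Type*} [MeasurableSpace E]

lemma toMeasure_dilate [SMul M E] [MeasurableConstSMul M E] (c : M) (μ : ProbabilityMeasure E) :
    (dilate c μ).toMeasure = μ.toMeasure.map (c • ·) :=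
  rfl

lemma toMeasure_diracProba (x : E) : (diracProba x).toMeasure = Measure.dirac x :=
  rfl

lemma dilate_one [Monoid M] [MulAction M E] [MeasurableConstSMul M E] (μ : ProbabilityMeasure E) :
    dilate (1 : M) μ = μ :=
  ProbabilityMeasure.toMeasure_injective <| by simp [toMeasure_dilate]

lemma dilate_mul [Monoid M] [MulAction M E] [MeasurableConstSMul M E] (b c : M)
    (μ : ProbabilityMeasure E) : dilate (b * c) μ = dilate b (dilate c μ) :=
  ProbabilityMeasure.toMeasure_injective <| by
    simp only [toMeasure_dilate, mul_smul]
    exact (Measure.map_map (measurable_const_smul b) (measurable_const_smul c)).symm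

lemma dilate_zero [Zero M] [Zero E] [SMulWithZero M E] [MeasurableConstSMul M E]
    (μ : ProbabilityMeasure E) : dilate (0 : M) μ = diracProba 0 :=
  ProbabilityMeasure.toMeasure_injective <| by simp [toMeasure_dilate, toMeasure_diracProba]

lemma dilate_diracProba_zero [Zero E] [SMulZeroClass M E] [MeasurableConstSMul M E] (c : M) :
    dilate c (diracProba (0 : E)) = diracProba 0 :=
  ProbabilityMeasure.toMeasure_injective <| by
    rw [toMeasure_dilate, toMeasure_diracProba, Measure.map_dirac' (measurable_const_smul c),
      smul_zero]

lemma dilate_ne_diracProba_zero [GroupWithZero M] [Zero E] [MulActionWithZero M E]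
    [MeasurableConstSMul M E] {c : M} {μ : ProbabilityMeasure E} (hc : c ≠ 0)
    (hμ : μ ≠ diracProba 0) : dilate c μ ≠ diracProba 0 := fun h => hμ <| by
  rw [← dilate_one (M := M) μ, ← inv_mul_cancel₀ hc, dilate_mul, h, dilate_diracProba_zero]

lemma dilate_div_dilate_inv [DivisionCommMonoid M] [MulAction M E] [MeasurableConstSMul M E]
    {c : M} (hc : IsUnit c) (b : M) (μ : ProbabilityMeasure E) :
    dilate (c / b) (dilate c⁻¹ μ) = dilate b⁻¹ μ := by
  rw [← dilate_mul, div_eq_mul_inv, mul_right_comm, hc.mul_inv_cancel, one_mul]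

lemma map_dilate {N F : Type*} [MeasurableSpace F] [SMul M E] [SMul N F] [MeasurableConstSMul M E]
    [MeasurableConstSMul N F] {g : E → F} (hg : Measurable g) {c : M} {b : N}
    (hgc : ∀ x, g (c • x) = b • g x) (μ : ProbabilityMeasure E) :
    (dilate c μ).map hg.aemeasurable = dilate b (μ.map hg.aemeasurable) :=
  ProbabilityMeasure.toMeasure_injective <| by
    simp only [toMeasure_dilate, ProbabilityMeasure.toMeasure_map]
    rw [Measure.map_map hg (measurable_const_smul c), Measure.map_map (measurable_const_smul b) hg]
    exact congrArg (Measure.map · μ) (funext hgc)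

open TopologicalSpace

variable [TopologicalSpace M] [PseudoMetrizableSpace M] [SecondCountableTopology M]
  [TopologicalSpace E] [PseudoMetrizableSpace E] [SecondCountableTopology E] [BorelSpace E]
  [SMul M E] [ContinuousSMul M E]

lemma continuous_dilate : Continuous fun p : M × ProbabilityMeasure E => dilate p.1 p.2 := by
  borelize M
  have hsmul : Continuous fun p : M × E => p.1 • p.2 := continuous_smul
  have dilate_eq_map_prod : ∀ (c : M) (μ : ProbabilityMeasure E),
      dilate c μ = ((diracProba c).prod μ).map hsmul.measurable.aemeasurable := fun c μ =>
    ProbabilityMeasure.toMeasure_injective <| by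
      rw [toMeasure_dilate, ProbabilityMeasure.toMeasure_map, ProbabilityMeasure.toMeasure_prod,
        toMeasure_diracProba, Measure.dirac_prod,
        Measure.map_map hsmul.measurable measurable_prodMk_left]
      rfl
  simp only [dilate_eq_map_prod]
  exact (ProbabilityMeasure.continuous_map hsmul).comp <|
    ProbabilityMeasure.continuous_prod.comp (continuous_diracProba.prodMap continuous_id)

lemma dilate_eq_of_tendsto {ι : Type*} {l : Filter ι} [l.NeBot] {r : ι → M} {c : M}
    {μs : ι → ProbabilityMeasure E} {μ ν : ProbabilityMeasure E} (hr : Tendsto r l (𝓝 c))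
    (hμ : Tendsto μs l (𝓝 μ)) (hν : Tendsto (fun i => dilate (r i) (μs i)) l (𝓝 ν)) :
    dilate c μ = ν :=
  tendsto_nhds_unique ((continuous_dilate.tendsto (c, μ)).comp (hr.prodMk_nhds hμ)) hν

end Dilation

section ConvergenceOfTypes

lemma tendsto_toReal_of_tendsto_ofReal {ι : Type*} {l : Filter ι} {r : ι → ℝ} {x : ENNReal}
    (hr : ∀ᶠ i in l, 0 ≤ r i) (hx : x ≠ ⊤)
    (h : Tendsto (fun i => ENNReal.ofReal (r i)) l (𝓝 x)) : Tendsto r l (𝓝 x.toReal) :=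
  ((ENNReal.tendsto_toReal hx).comp h).congr' <| hr.mono fun _ => ENNReal.toReal_ofReal

open TopologicalSpace

variable {E : Type*} [TopologicalSpace E] [PseudoMetrizableSpace E] [SecondCountableTopology E]
  [MeasurableSpace E] [BorelSpace E] [Zero E] [MulActionWithZero ℝ E] [ContinuousSMul ℝ E]
  {ι : Type*} {l : Filter ι} [l.NeBot] {r : ι → ℝ} {μs : ι → ProbabilityMeasure E}
  {μ ν : ProbabilityMeasure E} {b c : ℝ}

lemma eq_diracProba_zero_of_tendsto_atTop (hr : Tendsto r l atTop) (hμ : Tendsto μs l (𝓝 μ))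
    (hν : Tendsto (fun i => dilate (r i) (μs i)) l (𝓝 ν)) : μ = diracProba 0 := by
  have hinv : Tendsto (fun i => dilate (r i)⁻¹ (dilate (r i) (μs i))) l (𝓝 μ) := by
    refine hμ.congr' ?_
    filter_upwards [hr.eventually_gt_atTop 0] with i hi
    rw [← dilate_mul, inv_mul_cancel₀ hi.ne', dilate_one]
  rw [← dilate_eq_of_tendsto hr.inv_tendsto_atTop hν hinv, dilate_zero]

lemma eq_of_dilate_eq_dilate (hμ : μ ≠ diracProba 0) (hb : 0 < b) (hc : 0 < c)
    (h : dilate b μ = dilate c μ) : b = c := by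
  by_contra hne
  wlog hbc : b < c generalizing b c
  · exact this hc hb h.symm (Ne.symm hne) (lt_of_le_of_ne (not_lt.1 hbc) (Ne.symm hne))
  have hratio : dilate (c / b) μ = μ := by
    rw [div_eq_inv_mul, dilate_mul, ← h, ← dilate_mul, inv_mul_cancel₀ hb.ne', dilate_one]
  have hpow : ∀ n : ℕ, dilate ((c / b) ^ n) μ = μ := fun n => by
    induction n with
    | zero => rw [pow_zero, dilate_one]
    | succ n ih => rw [pow_succ, dilate_mul, hratio, ih]
  refine hμ (eq_diracProba_zero_of_tendsto_atTop (ν := μ)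
    (tendsto_pow_atTop_atTop_of_one_lt ((one_lt_div hb).2 hbc)) tendsto_const_nhds ?_)
  simp only [hpow, tendsto_const_nhds]

/- Any cluster point of the scales in the compact space `[0, ∞]` must be the unique finite positive
scale carrying `μ` to `ν`: clustering at `∞` would force `μ = δ₀`, at `0` it would force
`ν = δ₀`. -/
theorem exists_tendsto_of_tendsto_dilate (hr : ∀ᶠ i in l, 0 < r i) (hμ : Tendsto μs l (𝓝 μ))
    (hν : Tendsto (fun i => dilate (r i) (μs i)) l (𝓝 ν)) (hμ₀ : μ ≠ diracProba 0)
    (hν₀ : ν ≠ diracProba 0) : ∃ c, 0 < c ∧ Tendsto r l (𝓝 c) ∧ dilate c μ = ν := by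
  have hr₀ : ∀ᶠ i in l, 0 ≤ r i := hr.mono fun _ => le_of_lt
  have hcluster : ∀ x, MapClusterPt x l (fun i => ENNReal.ofReal (r i)) →
      x ≠ ⊤ ∧ 0 < x.toReal ∧ dilate x.toReal μ = ν := fun x hx => by
    obtain ⟨u, hul, hux⟩ := mapClusterPt_iff_ultrafilter.1 hx
    have hμu := hμ.mono_left hul
    have hνu := hν.mono_left hul
    have hx_top : x ≠ ⊤ := by
      rintro rfl
      exact hμ₀ (eq_diracProba_zero_of_tendsto_atTop
        (ENNReal.tendsto_ofReal_nhds_top.1 hux) hμu hνu)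
    have hdil := dilate_eq_of_tendsto
      (tendsto_toReal_of_tendsto_ofReal (hul hr₀) hx_top hux) hμu hνu
    refine ⟨hx_top, ENNReal.toReal_nonneg.lt_of_ne' fun h₀ => hν₀ ?_, hdil⟩
    rw [← hdil, h₀, dilate_zero]
  obtain ⟨x, hx⟩ := exists_clusterPt_of_compactSpace (map (fun i => ENNReal.ofReal (r i)) l)
  obtain ⟨hx_top, hx_pos, hdil⟩ := hcluster x hx
  have hlim : Tendsto (fun i => ENNReal.ofReal (r i)) l (𝓝 x) := by
    refine le_nhds_of_unique_clusterPt fun y hy => ?_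
    obtain ⟨hy_top, hy_pos, hdil'⟩ := hcluster y hy
    exact (ENNReal.toReal_eq_toReal_iff' hy_top hx_top).1
      (eq_of_dilate_eq_dilate hμ₀ hy_pos hx_pos (hdil'.trans hdil.symm))
  exact ⟨x.toReal, hx_pos, tendsto_toReal_of_tendsto_ofReal hr₀ hx_top hlim, hdil⟩

lemma continuousOn_of_continuousOn_dilate {T : Type*} [TopologicalSpace T] {ψ : T → ℝ} {s : Set T}
    (hψ : ∀ x ∈ s, 0 < ψ x) (hμ : μ ≠ diracProba 0)
    (hcont : ContinuousOn (fun x => dilate (ψ x) μ) s) : ContinuousOn ψ s := by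
  intro x hx
  have := mem_closure_iff_nhdsWithin_neBot.1 (subset_closure hx)
  obtain ⟨c, hc, hlim, hdil⟩ := exists_tendsto_of_tendsto_dilate
    (eventually_nhdsWithin_of_forall hψ) tendsto_const_nhds (hcont x hx) hμ
    (dilate_ne_diracProba_zero (hψ x hx).ne' hμ)
  rwa [eq_of_dilate_eq_dilate hμ hc (hψ x hx) hdil] at hlim

end ConvergenceOfTypes

section RegularVariation

variable {ι : Type*} {f : (ι → ℝ) → ℝ} {x y : ι → ℝ}

/-- Coordinate-wise slowly varying functions on the open orthant, where `a → ∞` means that all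
coordinates of `a` tend to `∞`. -/
def IsCoordSlowlyVarying (L : (ι → ℝ) → ℝ) : Prop :=
  ∀ x : ι → ℝ, (∀ i, 0 < x i) → Tendsto (fun a => L (a * x) / L a) atTop (𝓝 1)

lemma tendsto_mul_const_atTop_pi (hx : ∀ i, 0 < x i) :
    Tendsto (fun a : ι → ℝ => a * x) atTop atTop := by
  refine tendsto_atTop.2 fun b => ?_
  filter_upwards [eventually_ge_atTop (b / x)] with a ha i
  exact (div_le_iff₀ (hx i)).1 (ha i)

lemma eventually_forall_pos_atTop_pi : ∀ᶠ a : ι → ℝ in atTop, ∀ i, 0 < a i := by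
  filter_upwards [eventually_ge_atTop 1] with a ha i
  exact one_pos.trans_le (ha i)

lemma map_mul_of_tendsto_div {ψ : (ι → ℝ) → ℝ} (hf : ∀ a, (∀ i, 0 < a i) → 0 < f a)
    (hψ : ∀ x, (∀ i, 0 < x i) → Tendsto (fun a => f (a * x) / f a) atTop (𝓝 (ψ x)))
    (hx : ∀ i, 0 < x i) (hy : ∀ i, 0 < y i) : ψ (x * y) = ψ x * ψ y := by
  refine tendsto_nhds_unique (hψ (x * y) fun i => mul_pos (hx i) (hy i)) ?_
  rw [mul_comm (ψ x)]
  refine (((hψ y hy).comp (tendsto_mul_const_atTop_pi hx)).mul (hψ x hx)).congr' ?_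
  filter_upwards [(tendsto_mul_const_atTop_pi hx).eventually eventually_forall_pos_atTop_pi]
    with a ha
  rw [Function.comp_apply, div_mul_div_cancel₀ (hf _ ha).ne', mul_assoc]

variable [Fintype ι] {H : ι → ℝ}

lemma prod_rpow_pos (hx : ∀ i, 0 < x i) : 0 < ∏ i, x i ^ H i :=
  Finset.prod_pos fun i _ => Real.rpow_pos_of_pos (hx i) _

lemma prod_mul_rpow (hx : ∀ i, 0 < x i) (hy : ∀ i, 0 < y i) :
    ∏ i, (x * y) i ^ H i = (∏ i, x i ^ H i) * ∏ i, y i ^ H i := by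
  rw [← Finset.prod_mul_distrib]
  exact Finset.prod_congr rfl fun i _ => Real.mul_rpow (hx i).le (hy i).le

lemma isCoordSlowlyVarying_div_prod_rpow
    (hf : ∀ x, (∀ i, 0 < x i) →
      Tendsto (fun a => f (a * x) / f a) atTop (𝓝 (∏ i, x i ^ H i))) :
    IsCoordSlowlyVarying fun a => f a / ∏ i, a i ^ H i := by
  intro x hx
  have hratio := (hf x hx).div_const (∏ i, x i ^ H i)
  rw [div_self (prod_rpow_pos hx).ne'] at hratio
  refine hratio.congr' ?_
  filter_upwards [eventually_forall_pos_atTop_pi] with a ha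
  rw [prod_mul_rpow ha hx, div_div_div_comm, mul_div_cancel_left₀ _ (prod_rpow_pos ha).ne']

lemma exists_eq_prod_rpow_of_map_mul {ψ : (ι → ℝ) → ℝ} (hpos : ∀ x, (∀ i, 0 < x i) → 0 < ψ x)
    (hmul : ∀ x y, (∀ i, 0 < x i) → (∀ i, 0 < y i) → ψ (x * y) = ψ x * ψ y)
    (hcont : ContinuousOn ψ {x | ∀ i, 0 < x i}) :
    ∃ H : ι → ℝ, ∀ x, (∀ i, 0 < x i) → ψ x = ∏ i, x i ^ H i := by
  classical
  let e : (ι → ℝ) → ι → ℝ := fun u i => Real.exp (u i)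
  have he : ∀ u i, 0 < e u i := fun u i => Real.exp_pos _
  have hψe : Continuous fun u => ψ (e u) := hcont.comp_continuous (by fun_prop) he
  let G : (ι → ℝ) →+ ℝ := AddMonoidHom.mk' (fun u => Real.log (ψ (e u))) fun u v => by
    rw [← Real.log_mul (hpos _ (he u)).ne' (hpos _ (he v)).ne', ← hmul _ _ (he u) (he v)]
    exact congrArg (Real.log ∘ ψ) (funext fun i => Real.exp_add _ _)
  have hG : Continuous G := hψe.log fun u => (hpos _ (he u)).ne'
  refine ⟨fun i => G (Pi.single i 1), fun x hx => ?_⟩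
  have hlin : G (fun i => Real.log (x i)) = ∑ i, Real.log (x i) * G (Pi.single i 1) := by
    conv_lhs => rw [pi_eq_sum_univ' fun i => Real.log (x i), map_sum]
    exact Finset.sum_congr rfl fun i _ => map_real_smul G hG _ _
  have hex : e (fun i => Real.log (x i)) = x := funext fun i => Real.exp_log (hx i)
  calc ψ x = Real.exp (G fun i => Real.log (x i)) := by
        rw [AddMonoidHom.mk'_apply, Real.exp_log (hpos _ (he _)), hex]
    _ = ∏ i, x i ^ G (Pi.single i 1) := by
        rw [hlin, Real.exp_sum]
        exact Finset.prod_congr rfl fun i _ => (Real.rpow_def_of_pos (hx i) _).symm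

end RegularVariation

section Lamperti

open TopologicalSpace

variable {ι E : Type*} [Fintype ι] [TopologicalSpace E] [PseudoMetrizableSpace E]
  [SecondCountableTopology E] [MeasurableSpace E] [BorelSpace E] [Zero E] [MulActionWithZero ℝ E]
  [ContinuousSMul ℝ E]

/- A negative exponent would make the scale blow up as the `i`-th coordinate of the point `1`
decreases to `0`, while the rescaled laws converge to `ρ` on the face `{t | t i = 0}`. -/
lemma nonneg_of_eq_dilate_prod_rpow {ρ : (ι → ℝ) → ProbabilityMeasure E} {H : ι → ℝ}
    (hρ : ContinuousOn ρ (Set.Ici 0)) (hρ₀ : ρ 1 ≠ diracProba 0)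
    (hdil : ∀ x, (∀ i, 0 < x i) → ρ x = dilate (∏ i, x i ^ H i) (ρ 1)) : 0 ≤ H := by
  classical
  intro i
  by_contra! hi
  let p : ℝ → ι → ℝ := Function.update (1 : ι → ℝ) i
  have hp : ∀ s, 0 < s → ∀ k, 0 < p s k := fun s hs k => by
    rcases eq_or_ne k i with rfl | hk
    · simpa [p] using hs
    · simp [p, hk]
  have hp_lim : Tendsto p (𝓝[>] 0) (𝓝[Set.Ici 0] p 0) := by
    refine tendsto_nhdsWithin_iff.2 ⟨?_, ?_⟩
    · exact ((continuous_const.update i continuous_id).tendsto 0).mono_left nhdsWithin_le_nhds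
    · filter_upwards [self_mem_nhdsWithin] with s hs k using (hp s hs k).le
  have hp0 : p 0 ∈ Set.Ici (0 : ι → ℝ) := fun k => by
    rcases eq_or_ne k i with rfl | hk
    · simp [p]
    · simp [p, hk]
  have hprod : ∀ s, ∏ k, p s k ^ H k = s ^ H i := fun s => by
    rw [Finset.prod_eq_single i (fun k _ hk => by simp [p, hk]) (by simp)]
    simp [p]
  refine hρ₀ (eq_diracProba_zero_of_tendsto_atTop (tendsto_rpow_neg_nhdsGT_zero hi)
    tendsto_const_nhds (((hρ _ hp0).tendsto.comp hp_lim).congr' ?_))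
  filter_upwards [self_mem_nhdsWithin] with s hs
  rw [Function.comp_apply, hdil _ (hp s hs), hprod]

theorem exists_tendsto_div_prod_rpow {η ρ : (ι → ℝ) → ProbabilityMeasure E} {f : (ι → ℝ) → ℝ}
    (hf : ∀ a, (∀ i, 0 < a i) → 0 < f a)
    (hη : ∀ t, (∀ i, 0 < t i) →
      Tendsto (fun a => dilate (f a)⁻¹ (η (a * t))) atTop (𝓝 (ρ t)))
    (hρ : ContinuousOn ρ (Set.Ici 0)) (hρ₀ : ∀ t, (∀ i, 0 < t i) → ρ t ≠ diracProba 0) :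
    ∃ H : ι → ℝ, 0 ≤ H ∧ ∀ x, (∀ i, 0 < x i) →
      Tendsto (fun a => f (a * x) / f a) atTop (𝓝 (∏ i, x i ^ H i)) := by
  have h_one : ∀ i : ι, (0 : ℝ) < (1 : ι → ℝ) i := fun _ => one_pos
  have hratio : ∀ x, (∀ i, 0 < x i) → ∃ c, 0 < c ∧
      Tendsto (fun a => f (a * x) / f a) atTop (𝓝 c) ∧ dilate c (ρ 1) = ρ x := by
    intro x hx
    have hpos := eventually_forall_pos_atTop_pi.and
      ((tendsto_mul_const_atTop_pi hx).eventually eventually_forall_pos_atTop_pi)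
    refine exists_tendsto_of_tendsto_dilate (hpos.mono fun a ha => div_pos (hf _ ha.2) (hf _ ha.1))
      ((hη 1 h_one).comp (tendsto_mul_const_atTop_pi hx)) ((hη x hx).congr' ?_)
      (hρ₀ 1 h_one) (hρ₀ x hx)
    filter_upwards [hpos] with a ha
    rw [Function.comp_apply, mul_one, dilate_div_dilate_inv (hf _ ha.2).ne'.isUnit]
  choose! ψ hψ_pos hψ hdil using hratio
  have hψ_cont : ContinuousOn ψ {x | ∀ i, 0 < x i} :=
    continuousOn_of_continuousOn_dilate hψ_pos (hρ₀ 1 h_one) <|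
      (hρ.mono fun x hx i => (hx i).le).congr hdil
  obtain ⟨H, hH⟩ := exists_eq_prod_rpow_of_map_mul hψ_pos
    (fun x y => map_mul_of_tendsto_div hf hψ) hψ_cont
  refine ⟨H, nonneg_of_eq_dilate_prod_rpow hρ (hρ₀ 1 h_one) fun x hx => ?_, fun x hx => ?_⟩
  · rw [← hH x hx, hdil x hx]
  · rw [← hH x hx]
    exact hψ x hx

end Lamperti

section Law

variable {Ω F : Type*} [MeasurableSpace Ω] [MeasurableSpace F] (P : Measure Ω)
  [IsProbabilityMeasure P]

/-- The law of a random variable, bundled as a probability measure so that weak convergence is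
convergence in the topology of `ProbabilityMeasure`. -/
noncomputable def law {Z : Ω → F} (hZ : Measurable Z) : ProbabilityMeasure F :=
  ⟨P.map Z, Measure.isProbabilityMeasure_map hZ.aemeasurable⟩

/-- The finite-dimensional distribution of the random field `Z` at the points `t i`. -/
noncomputable def fdd {T κ : Type*} {Z : T → Ω → F} (hZ : ∀ t, Measurable (Z t)) (t : κ → T) :
    ProbabilityMeasure (κ → F) :=
  law P (measurable_pi_lambda (fun ω i => Z (t i) ω) fun i => hZ (t i))

lemma toMeasure_law {Z : Ω → F} (hZ : Measurable Z) : (law P hZ).toMeasure = P.map Z :=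
  rfl

lemma map_law {G : Type*} [MeasurableSpace G] {Z : Ω → F} (hZ : Measurable Z) {g : F → G}
    (hg : Measurable g) : (law P hZ).map hg.aemeasurable = law P (hg.comp hZ) :=
  ProbabilityMeasure.toMeasure_injective (Measure.map_map hg hZ)

lemma dilate_law {M : Type*} [SMul M F] [MeasurableConstSMul M F] (c : M) {Z : Ω → F}
    (hZ : Measurable Z) : dilate c (law P hZ) = law P (hZ.const_smul c) :=
  map_law P hZ (measurable_const_smul c)

lemma ae_eq_of_law_eq_diracProba [MeasurableSingletonClass F] {Z : Ω → F} (hZ : Measurable Z)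
    {x : F} (h : law P hZ = diracProba x) : ∀ᵐ ω ∂P, Z ω = x := by
  refine ae_of_ae_map hZ.aemeasurable (p := (· = x)) ?_
  rw [← toMeasure_law P hZ, h, toMeasure_diracProba, ae_dirac_eq, eventually_pure]

lemma tendsto_law_iff_forall_integral_tendsto {ι Ω' : Type*} [MeasurableSpace Ω']
    [TopologicalSpace F] [OpensMeasurableSpace F] {l : Filter ι} (P' : Measure Ω')
    [IsProbabilityMeasure P'] {U : ι → Ω' → F} (hU : ∀ a, Measurable (U a)) {Z : Ω → F}
    (hZ : Measurable Z) :
    Tendsto (fun a => law P' (hU a)) l (𝓝 (law P hZ)) ↔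
      ∀ φ : BoundedContinuousFunction F ℝ,
        Tendsto (fun a => ∫ ω, φ (U a ω) ∂P') l (𝓝 (∫ ω, φ (Z ω) ∂P)) := by
  rw [ProbabilityMeasure.tendsto_iff_forall_integral_tendsto]
  refine forall_congr' fun φ => ?_
  have hφ : ∀ Q : Measure F, AEStronglyMeasurable φ Q := fun Q =>
    φ.continuous.measurable.aestronglyMeasurable
  simp only [toMeasure_law, integral_map (hU _).aemeasurable (hφ _),
    integral_map hZ.aemeasurable (hφ _)]

lemma continuousOn_law_of_tendstoInMeasure {T : Type*} [TopologicalSpace T]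
    [FirstCountableTopology T] [PseudoEMetricSpace F] [BorelSpace F] {Z : T → Ω → F}
    (hZ : ∀ t, Measurable (Z t)) {s : Set T}
    (hcont : ∀ t ∈ s, ∀ u : ℕ → T, (∀ n, u n ∈ s) → Tendsto u atTop (𝓝 t) →
      TendstoInMeasure P (fun n => Z (u n)) atTop (Z t)) :
    ContinuousOn (fun t => law P (hZ t)) s := by
  rw [continuousOn_iff_continuous_domRestrict, continuous_iff_seqContinuous]
  intro u t hu
  exact ((hcont t t.2 (fun n => u n) (fun n => (u n).2)
    ((continuous_subtype_val.tendsto t).comp hu)).tendstoInDistribution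
      fun n => (hZ _).aemeasurable).tendsto

end Law

section DiagonalAttraction

open TopologicalSpace

variable {ι κ E Ω Ω' : Type*} [Countable κ] [TopologicalSpace E] [SecondCountableTopology E]
  [MeasurableSpace E] [BorelSpace E] [Zero E] [MulActionWithZero ℝ E]
  [ContinuousSMul ℝ E] [MeasurableSpace Ω] [MeasurableSpace Ω'] {P : Measure Ω}
  [IsProbabilityMeasure P] {P' : Measure Ω'} [IsProbabilityMeasure P']
  {X : (ι → ℝ) → Ω → κ → E} {Y : (ι → ℝ) → Ω' → κ → E} {hX : ∀ t, Measurable (X t)}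
  {hY : ∀ t, Measurable (Y t)} {f : (ι → ℝ) → κ → ℝ}

variable (P P') in
/-- `Y` belongs to the diagonal domain of attraction of `X` with normalizing function `f`: the
finite-dimensional distributions of `(Y_j(a·t) / f_j(a))_j` on the closed orthant converge weakly
to those of `X` as `a → ∞`. -/
def IsInDiagonalDomainOfAttraction (hY : ∀ t, Measurable (Y t)) (hX : ∀ t, Measurable (X t))
    (f : (ι → ℝ) → κ → ℝ) : Prop :=
  ∀ (k : ℕ) (t : Fin k → ι → ℝ), (∀ i, 0 ≤ t i) →
    Tendsto (fun a => dilate (f a)⁻¹ (fdd P' hY fun i => a * t i)) atTop (𝓝 (fdd P hX t))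

namespace IsInDiagonalDomainOfAttraction

lemma tendsto_dilate_law_apply (h : IsInDiagonalDomainOfAttraction P P' hY hX f) (j : κ)
    {t : ι → ℝ} (ht : 0 ≤ t) :
    Tendsto (fun a => dilate (f a j)⁻¹ (law P' ((measurable_pi_apply j).comp (hY (a * t)))))
      atTop (𝓝 (law P ((measurable_pi_apply j).comp (hX t)))) := by
  have hg : Continuous fun y : Fin 1 → κ → E => y 0 j := by fun_prop
  have hlim := ProbabilityMeasure.tendsto_map_of_tendsto_of_continuous _ _
    (h 1 (fun _ => t) fun _ => ht) hg
  rw [fdd, map_law P _ hg.measurable] at hlim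
  refine hlim.congr fun a => ?_
  rw [map_dilate hg.measurable (b := (f a j)⁻¹) fun _ => rfl, fdd, map_law P' _ hg.measurable]

variable [PseudoMetrizableSpace E]

lemma fdd_mul (h : IsInDiagonalDomainOfAttraction P P' hY hX f)
    (hf : ∀ a, (∀ i, 0 < a i) → ∀ j, 0 < f a j) {x : ι → ℝ} (hx : ∀ i, 0 < x i) {c : κ → ℝ}
    (hc : ∀ j, Tendsto (fun a => f (a * x) j / f a j) atTop (𝓝 (c j))) {k : ℕ}
    {t : Fin k → ι → ℝ} (ht : ∀ i, 0 ≤ t i) :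
    fdd P hX (fun i => x * t i) = dilate c (fdd P hX t) := by
  refine (dilate_eq_of_tendsto (r := fun a => f (a * x) / f a) (tendsto_pi_nhds.2 hc)
    ((h k t ht).comp (tendsto_mul_const_atTop_pi hx)) ?_).symm
  refine (h k _ fun i => mul_nonneg (fun i => (hx i).le) (ht i)).congr' ?_
  filter_upwards [(tendsto_mul_const_atTop_pi hx).eventually eventually_forall_pos_atTop_pi]
    with a ha
  have hunit : IsUnit (f (a * x)) := Pi.isUnit_iff.2 fun j => (hf _ ha j).ne'.isUnit
  simp only [Function.comp_apply, dilate_div_dilate_inv hunit, mul_assoc]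

end IsInDiagonalDomainOfAttraction

variable (hX hY) in
theorem stmt_14_general [Fintype ι] [PseudoMetrizableSpace E] [T1Space E]
    (hXcont : ContinuousOn (fun t => law P (hX t)) (Set.Ici 0))
    (hX₀ : ∀ (j : κ) (t : ι → ℝ), (∀ i, 0 < t i) → ¬ ∀ᵐ ω ∂P, X t ω j = 0)
    (hf : ∀ a, (∀ i, 0 < a i) → ∀ j, 0 < f a j)
    (hXY : IsInDiagonalDomainOfAttraction P P' hY hX f) :
    ∃ (H : κ → ι → ℝ) (L : κ → (ι → ℝ) → ℝ), 0 ≤ H ∧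
      (∀ j a, (∀ i, 0 < a i) → 0 < L j a) ∧ (∀ j, IsCoordSlowlyVarying (L j)) ∧
      (∀ a, (∀ i, 0 < a i) → ∀ j, f a j = (∏ i, a i ^ H j i) * L j a) ∧
      ∀ a, (∀ i, 0 < a i) → ∀ (k : ℕ) (t : Fin k → ι → ℝ), (∀ i, 0 ≤ t i) →
        fdd P hX (fun i => a * t i) = dilate (fun j => ∏ i, a i ^ H j i) (fdd P hX t) := by
  have hexp : ∀ j, ∃ H : ι → ℝ, 0 ≤ H ∧ ∀ x, (∀ i, 0 < x i) →
      Tendsto (fun a => f (a * x) j / f a j) atTop (𝓝 (∏ i, x i ^ H i)) := fun j => by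
    have hcoord : Continuous fun y : κ → E => y j := continuous_apply j
    have hcont_coord := (ProbabilityMeasure.continuous_map hcoord).comp_continuousOn hXcont
    exact exists_tendsto_div_prod_rpow
      (η := fun t => law P' ((measurable_pi_apply j).comp (hY t))) (fun a ha => hf a ha j)
      (fun t ht => hXY.tendsto_dilate_law_apply j fun i => (ht i).le)
      (hcont_coord.congr fun t _ => (map_law P (hX t) hcoord.measurable).symm)
      fun t ht => mt (ae_eq_of_law_eq_diracProba P _) (hX₀ j t ht)
  choose H hH hlim using hexp
  exact ⟨H, fun j a => f a j / ∏ i, a i ^ H j i, hH,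
    fun j a ha => div_pos (hf a ha j) (prod_rpow_pos ha),
    fun j => isCoordSlowlyVarying_div_prod_rpow (hlim j),
    fun a ha j => (mul_div_cancel₀ _ (prod_rpow_pos ha).ne').symm,
    fun a ha k t ht => hXY.fdd_mul hf ha (fun j => hlim j a ha) ht⟩

end DiagonalAttraction

/-- Let `X` be an `ℝ^m`-valued random field on `T = [0,∞)^d`,
continuous in probability, with `X_j(t)` not a.s. constant for every `j` and
every `t ∈ (0,∞)^d`. Suppose `Y` belongs to the diagonal domain of attraction of
`X` with normalizing function `f = (f₁,...,f_m) : (0,∞)^d → (0,∞)^m`, i.e. the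
finite-dimensional distributions of `(Y_j(a·t)/f_j(a))_j` converge weakly to those
of `X` as `a → ∞` (`min_i a_i → ∞`). Then `f_j(a) = (∏_i a_i^{H_i^{(j)}})·L_j(a)`
with nonnegative reals `H_i^{(j)}` and coordinate-wise slowly varying `L_j`, and
`X` is multi-self-similar with exponents `H`. -/
theorem stmt_14 {d m : ℕ} {Ω Ω' : Type*} [MeasurableSpace Ω] [MeasurableSpace Ω']
    (P : Measure Ω) [IsProbabilityMeasure P]
    (P' : Measure Ω') [IsProbabilityMeasure P']
    (X : (Fin d → ℝ) → Ω → (Fin m → ℝ))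
    (Y : (Fin d → ℝ) → Ω' → (Fin m → ℝ))
    (hXmeas : ∀ t, Measurable (X t))
    (hYmeas : ∀ t, Measurable (Y t))
    -- `X` is continuous in probability on `[0,∞)^d`
    (hXcont : ∀ t : Fin d → ℝ, (∀ i, 0 ≤ t i) →
      ∀ u : ℕ → Fin d → ℝ, (∀ n i, 0 ≤ u n i) → Tendsto u atTop (𝓝 t) →
        TendstoInMeasure P (fun n => X (u n)) atTop (X t))
    -- `X_j(t)` is not a.s. constant for `t ∈ (0,∞)^d`
    (hXnd : ∀ (j : Fin m) (t : Fin d → ℝ), (∀ i, 0 < t i) →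
      ¬ ∃ c : ℝ, ∀ᵐ ω ∂P, X t ω j = c)
    (f : (Fin d → ℝ) → Fin m → ℝ)
    (hfpos : ∀ a : Fin d → ℝ, (∀ i, 0 < a i) → ∀ j, 0 < f a j)
    -- convergence of finite-dimensional distributions as `a → ∞`
    (hconv : ∀ (k : ℕ) (t : Fin k → Fin d → ℝ), (∀ i i', 0 ≤ t i i') →
      ∀ φ : BoundedContinuousFunction (Fin k → Fin m → ℝ) ℝ,
        Tendsto (fun a : Fin d → ℝ =>
            ∫ ω, φ (fun i => fun j => Y (a * t i) ω j / f a j) ∂P')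
          atTop (𝓝 (∫ ω, φ (fun i => X (t i) ω) ∂P))) :
    ∃ (H : Fin m → Fin d → ℝ) (L : Fin m → (Fin d → ℝ) → ℝ),
      (∀ j i, 0 ≤ H j i) ∧
      (∀ (j : Fin m) (a : Fin d → ℝ), (∀ i, 0 < a i) → 0 < L j a) ∧
      -- each `L j` is coordinate-wise slowly varying
      (∀ (j : Fin m) (x : Fin d → ℝ), (∀ i, 0 < x i) →
        Tendsto (fun a : Fin d → ℝ => L j (a * x) / L j a) atTop (𝓝 1)) ∧
      (∀ a : Fin d → ℝ, (∀ i, 0 < a i) → ∀ j,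
        f a j = (∏ i, a i ^ H j i) * L j a) ∧
      -- `X` is multi-self-similar
      (∀ a : Fin d → ℝ, (∀ i, 0 < a i) →
        ∀ (k : ℕ) (t : Fin k → Fin d → ℝ), (∀ i i', 0 ≤ t i i') →
          Measure.map (fun ω => fun i => X (a * t i) ω) P
            = Measure.map
                (fun ω => fun i => fun j => (∏ i', a i' ^ H j i') * X (t i) ω j) P) := by
  have hXY : IsInDiagonalDomainOfAttraction P P' hYmeas hXmeas f := fun k t ht => by
    simp only [fdd, dilate_law]
    rw [tendsto_law_iff_forall_integral_tendsto]
    intro φ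
    exact (hconv k t ht φ).congr fun a => by simp only [div_eq_inv_mul]; rfl
  obtain ⟨H, L, hH, hL, hslow, hfac, hsim⟩ := stmt_14_general hXmeas hYmeas
    (continuousOn_law_of_tendstoInMeasure P hXmeas hXcont)
    (fun j t ht h => hXnd j t ht ⟨0, h⟩) hfpos hXY
  refine ⟨H, L, hH, hL, hslow, hfac, fun a ha k t ht => ?_⟩
  have hlaw := hsim a ha k t ht
  rw [fdd, fdd, dilate_law] at hlaw
  exact congrArg ProbabilityMeasure.toMeasure hlaw
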